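/- If (G, 𝓐) is a local convergence pairing on a Peano continuum X without cut points, then G acts as a convergence group on X. -/

import Mathlib

/-!
Work along a non-principal ultrafilter on `G`. Since `𝓐` is null and its stabilizers are convergence
groups, the translates `g • A` of a member `A` either shrink to a point or are eventually constant,
in which case `A` is mapped onto its image with north–south dynamics. Either way `A` has an
attractor, and the crux is that all members of `𝓐` have the same one.

Suppose that `A` and `B` have attractors `p ≠ q`. If they cross, they meet, and every common point
is the repeller of one of them, say `n` of `A`. The last axiom of a local convergence pairing then
yields a crossing sequence from `A` to `B` whose intermediate terms avoid `n` and the point that is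
eventually mapped to `p`, if there is one. Along this sequence two data propagate: the attractor
`p`, and the limit `n` of the attractors of the translates under the inverse dynamics. For if the
latter limit changed from one term to the next, then by fineness the translates of the intersection
of the two terms would lie in a fixed finite set, and a common point would eventually be mapped to
`p`. Hence `B` has attractor `p`, a contradiction.

Now let `p` and `n` be the common attractors under the dynamics and its inverse. A point `y ≠ p` is
separated from `p` by a finite union `E` of members of `𝓐`, and `g⁻¹ • E` converges to `n`. As `n`
is not a cut point, the points outside a given neighbourhood of `n` lie in a continuum `K` that
misses `n`; eventually `g • K` misses `E`, so no translates of these points accumulate at `y`.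
-/

open Set Filter Topology Pointwise

/-- The set `E` separates the points `x` and `y`: both lie outside `E` and in
different connected components of the complement of `E`. -/
def SepPts {X : Type*} [TopologicalSpace X] (E : Set X) (x y : X) : Prop :=
  x ∉ E ∧ y ∉ E ∧ connectedComponentIn Eᶜ x ≠ connectedComponentIn Eᶜ y

/-- The set `E` separates the set `Y ⊆ X \ E`: two points of `Y` lie in different
connected components of the complement of `E`. -/
def SepSet {X : Type*} [TopologicalSpace X] (E Y : Set X) : Prop :=
  Y ⊆ Eᶜ ∧ ∃ x ∈ Y, ∃ y ∈ Y, connectedComponentIn Eᶜ x ≠ connectedComponentIn Eᶜ y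

/-- Two (closed) sets `A` and `B` cross: they intersect, or each separates the other. -/
def Crosses {X : Type*} [TopologicalSpace X] (A B : Set X) : Prop :=
  (A ∩ B).Nonempty ∨ (SepSet A B ∧ SepSet B A)

/-- There is a (finite) crossing sequence in `𝓐` from `A` to `B`. -/
def CrossSeqFromTo {X : Type*} [TopologicalSpace X] (𝓐 : Set (Set X)) (A B : Set X) : Prop :=
  ∃ (n : ℕ) (c : ℕ → Set X), c 0 = A ∧ c n = B ∧ (∀ i ≤ n, c i ∈ 𝓐) ∧
    ∀ i < n, Crosses (c i) (c (i + 1))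

/-- A collection `𝓐` is cross-connected: any two of its elements are joined by a
crossing sequence in `𝓐`. -/
def CrossConnected {X : Type*} [TopologicalSpace X] (𝓐 : Set (Set X)) : Prop :=
  ∀ A ∈ 𝓐, ∀ B ∈ 𝓐, CrossSeqFromTo 𝓐 A B

/-- There is a crossing sequence `A, A_1, …, A_n, B` in `𝓐` (with `n ≥ 1`) whose
intermediate terms `A_1, …, A_n` are disjoint from `D`. -/
def CrossSeqAvoiding {X : Type*} [TopologicalSpace X] (𝓐 : Set (Set X)) (A B D : Set X) :
    Prop :=
  ∃ n : ℕ, 1 ≤ n ∧ ∃ c : ℕ → Set X, c 0 = A ∧ c (n + 1) = B ∧ (∀ i ≤ n + 1, c i ∈ 𝓐) ∧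
    (∀ i ≤ n, Crosses (c i) (c (i + 1))) ∧ ∀ i, 1 ≤ i → i ≤ n → c i ∩ D = ∅

/-- A collection of subsets of a metric space is null if for every `ε > 0` only finitely
many of its members have diameter greater than `ε`. -/
def NullFam {X : Type*} [PseudoMetricSpace X] (𝓐 : Set (Set X)) : Prop :=
  ∀ ε : ℝ, 0 < ε → {A ∈ 𝓐 | ε < Metric.diam A}.Finite

/-- A collection `𝓐` is fine if any two distinct points are separated by the union of
some finite subcollection of `𝓐`. -/
def FineFam {X : Type*} [PseudoMetricSpace X] (𝓐 : Set (Set X)) : Prop :=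
  ∀ x y : X, x ≠ y → ∃ 𝓑 ⊆ 𝓐, 𝓑.Finite ∧ SepPts (⋃₀ 𝓑) x y

/-- A sequence of maps `T i : X → X` acts as a convergence sequence on the subset `A`,
with repeller `n ∈ A` and attractor `p ∈ A`: for every compact `C ⊆ A \ {n}` and every
open neighborhood `U` of `p`, eventually `T i '' C ⊆ U`. -/
def ConvSeqOn {X : Type*} [TopologicalSpace X] (A : Set X) (T : ℕ → X → X) (n p : X) :
    Prop :=
  n ∈ A ∧ p ∈ A ∧ ∀ C : Set X, C ⊆ A → IsCompact C → n ∉ C →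
    ∀ U : Set X, IsOpen U → p ∈ U → ∀ᶠ i in atTop, T i '' C ⊆ U

/-- The stabilizer of a subset `A ⊆ X` in `G`. -/
def stab (G : Type*) {X : Type*} [Group G] [MulAction G X] (A : Set X) : Set G :=
  {g : G | g • A = A}

/-- The subset `S` of the group `G` acts as a convergence group on `A ⊆ X`: every
sequence of distinct elements of `S` has a subsequence acting as a convergence
sequence on `A`. -/
def ConvGroupOn {G X : Type*} [Group G] [MulAction G X] [TopologicalSpace X]
    (S : Set G) (A : Set X) : Prop :=
  ∀ g : ℕ → G, (∀ i, g i ∈ S) → Function.Injective g →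
    ∃ k : ℕ → ℕ, StrictMono k ∧ ∃ n p : X,
      ConvSeqOn A (fun i => (g (k i) • · : X → X)) n p

/-- `(G, 𝓐)` is a local convergence pairing on `X`. -/
structure IsLocalConvPairing (G : Type*) {X : Type*} [Group G] [MulAction G X]
    [MetricSpace X] (𝓐 : Set (Set X)) : Prop where
  closed : ∀ A ∈ 𝓐, IsClosed A
  invariant : ∀ g : G, ∀ A ∈ 𝓐, g • A ∈ 𝓐
  big : ∀ A ∈ 𝓐, 2 < A.encard
  null : NullFam 𝓐
  fine : FineFam 𝓐
  stabConv : ∀ A ∈ 𝓐, ConvGroupOn (stab G A) A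
  connect : ∀ A ∈ 𝓐, ∀ B ∈ 𝓐, (A ∩ B).encard ≤ 2 →
    (∀ c : X, A ∩ B = {c} → ∀ b ∈ B, b ≠ c → CrossSeqAvoiding 𝓐 A B {b, c}) ∧
    ((¬ ∃ c : X, A ∩ B = {c}) → CrossSeqAvoiding 𝓐 A B (A ∩ B))

section Separation

variable {G X : Type*} [TopologicalSpace X]

theorem exists_isCompact_isPreconnected_mem_nhds [T2Space X] [LocallyCompactSpace X]
    [LocallyConnectedSpace X] {c : X} {W : Set X} (hW : W ∈ 𝓝 c) :
    ∃ K ∈ 𝓝 c, IsCompact K ∧ IsPreconnected K ∧ K ⊆ W := by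
  obtain ⟨T, hT, hTW, hTc⟩ := local_compact_nhds hW
  have hcT : c ∈ interior T := mem_interior_iff_mem_nhds.2 hT
  have hsub : closure (connectedComponentIn (interior T) c) ⊆ T :=
    closure_minimal ((connectedComponentIn_subset _ _).trans interior_subset) hTc.isClosed
  refine ⟨closure (connectedComponentIn (interior T) c), ?_, hTc.of_isClosed_subset
    isClosed_closure hsub, isPreconnected_connectedComponentIn.closure, hsub.trans hTW⟩
  exact mem_of_superset (isOpen_interior.connectedComponentIn.mem_nhds
    (mem_connectedComponentIn hcT)) subset_closure

theorem exists_isCompact_isPreconnected_mem_mem [T2Space X] [LocallyCompactSpace X]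
    [LocallyConnectedSpace X] {Ω : Set X} (hΩ : IsOpen Ω) (hΩc : IsPreconnected Ω) {x y : X}
    (hx : x ∈ Ω) (hy : y ∈ Ω) :
    ∃ K, IsCompact K ∧ IsPreconnected K ∧ K ⊆ Ω ∧ x ∈ K ∧ y ∈ K := by
  refine hΩc.induction₂
    (fun x y => ∃ K, IsCompact K ∧ IsPreconnected K ∧ K ⊆ Ω ∧ x ∈ K ∧ y ∈ K) ?_ ?_ ?_ hx hy
  · intro x hx
    obtain ⟨K, hK, hKcpt, hKconn, hKΩ⟩ := exists_isCompact_isPreconnected_mem_nhds (hΩ.mem_nhds hx)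
    filter_upwards [mem_nhdsWithin_of_mem_nhds hK] with y hy
    exact ⟨K, hKcpt, hKconn, hKΩ, mem_of_mem_nhds hK, hy⟩
  · rintro x y z - - - ⟨K, hK, hKc, hKΩ, hxK, hyK⟩ ⟨L, hL, hLc, hLΩ, hyL, hzL⟩
    exact ⟨K ∪ L, hK.union hL, hKc.union y hyK hyL hLc, union_subset hKΩ hLΩ, .inl hxK, .inr hzL⟩
  · rintro x y - - ⟨K, hK, hKc, hKΩ, hxK, hyK⟩
    exact ⟨K, hK, hKc, hKΩ, hyK, hxK⟩

theorem exists_isCompact_isPreconnected_superset [T2Space X] [LocallyCompactSpace X]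
    [LocallyConnectedSpace X] {Ω C : Set X} (hC : IsCompact C) (hΩ : IsOpen Ω)
    (hΩc : IsPreconnected Ω) (hCΩ : C ⊆ Ω) :
    ∃ K, IsCompact K ∧ IsPreconnected K ∧ C ⊆ K ∧ K ⊆ Ω := by
  rcases Ω.eq_empty_or_nonempty with rfl | ⟨z, hz⟩
  · exact ⟨∅, isCompact_empty, isPreconnected_empty, hCΩ, le_rfl⟩
  suffices ∃ K, IsCompact K ∧ IsPreconnected K ∧ z ∈ K ∧ C ⊆ K ∧ K ⊆ Ω by
    obtain ⟨K, hK, hKc, -, hCK, hKΩ⟩ := this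
    exact ⟨K, hK, hKc, hCK, hKΩ⟩
  refine hC.induction_on
    (p := fun C => ∃ K, IsCompact K ∧ IsPreconnected K ∧ z ∈ K ∧ C ⊆ K ∧ K ⊆ Ω)
    ⟨{z}, isCompact_singleton, isPreconnected_singleton, rfl, empty_subset _,
      singleton_subset_iff.2 hz⟩ ?_ ?_ fun x hx => ?_
  · rintro s t hst ⟨K, hK, hKc, hzK, htK, hKΩ⟩
    exact ⟨K, hK, hKc, hzK, hst.trans htK, hKΩ⟩
  · rintro s t ⟨K, hK, hKc, hzK, hsK, hKΩ⟩ ⟨L, hL, hLc, hzL, htL, hLΩ⟩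
    exact ⟨K ∪ L, hK.union hL, hKc.union z hzK hzL hLc, .inl hzK, union_subset_union hsK htL,
      union_subset hKΩ hLΩ⟩
  · obtain ⟨K, hK, hKc, hKΩ, hxK, hzK⟩ :=
      exists_isCompact_isPreconnected_mem_mem hΩ hΩc (hCΩ hx) hz
    obtain ⟨L, hL, hLcpt, hLc, hLΩ⟩ :=
      exists_isCompact_isPreconnected_mem_nhds (hΩ.mem_nhds (hCΩ hx))
    exact ⟨L, mem_nhdsWithin_of_mem_nhds hL, K ∪ L, hK.union hLcpt,
      hKc.union x hxK (mem_of_mem_nhds hL) hLc, .inl hzK, subset_union_right,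
      union_subset hKΩ hLΩ⟩

theorem SepPts.notMem_of_isPreconnected {E K : Set X} {x y : X} (hE : SepPts E x y)
    (hK : IsPreconnected K) (hEK : Disjoint E K) (hx : x ∈ K) : y ∉ K := fun hy =>
  hE.2.2 (connectedComponentIn_eq (hK.subset_connectedComponentIn hx
    hEK.subset_compl_left hy))

theorem SepPts.eventually [LocallyConnectedSpace X] {E : Set X} {x y : X} (hE : IsClosed E)
    (h : SepPts E x y) : ∀ᶠ z in 𝓝 (x, y), SepPts E z.1 z.2 := by
  have hmem : ∀ {x}, x ∉ E → connectedComponentIn Eᶜ x ∈ 𝓝 x := fun hx =>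
    hE.isOpen_compl.connectedComponentIn.mem_nhds (mem_connectedComponentIn hx)
  filter_upwards [prod_mem_nhds (hmem h.1) (hmem h.2.1)] with z hz
  refine ⟨connectedComponentIn_subset _ _ hz.1, connectedComponentIn_subset _ _ hz.2, ?_⟩
  rw [← connectedComponentIn_eq hz.1, ← connectedComponentIn_eq hz.2]
  exact h.2.2

theorem SepSet.exists_sepPts {E Y : Set X} (h : SepSet E Y) :
    ∃ x ∈ Y, ∃ y ∈ Y, SepPts E x y :=
  let ⟨hYE, x, hx, y, hy, hne⟩ := h
  ⟨x, hx, y, hy, hYE hx, hYE hy, hne⟩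

theorem Crosses.symm {A B : Set X} (h : Crosses A B) : Crosses B A :=
  h.imp (by rw [inter_comm]; exact id) And.symm

variable [Group G] [MulAction G X] [ContinuousConstSMul G X]

theorem SepPts.smul {E : Set X} {x y : X} (h : SepPts E x y) (g : G) :
    SepPts (g • E) (g • x) (g • y) := by
  have himage : ∀ {z}, z ∉ E →
      connectedComponentIn (g • E)ᶜ (g • z) = g • connectedComponentIn Eᶜ z := fun hz => by
    rw [← smul_set_compl]
    exact ((Homeomorph.smul g).image_connectedComponentIn hz).symm
  refine ⟨mt smul_mem_smul_set_iff.1 h.1, mt smul_mem_smul_set_iff.1 h.2.1, ?_⟩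
  rw [himage h.1, himage h.2.1]
  exact (MulAction.injective g).ne h.2.2

theorem SepSet.smul {E Y : Set X} (h : SepSet E Y) (g : G) : SepSet (g • E) (g • Y) := by
  obtain ⟨x, hx, y, hy, hxy⟩ := h.exists_sepPts
  refine ⟨?_, g • x, smul_mem_smul_set hx, g • y, smul_mem_smul_set hy, (hxy.smul g).2.2⟩
  rw [← smul_set_compl]
  exact smul_set_mono h.1

theorem Crosses.smul {A B : Set X} (h : Crosses A B) (g : G) : Crosses (g • A) (g • B) := by
  refine h.imp (fun hAB => ?_) fun hs => ⟨hs.1.smul g, hs.2.smul g⟩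
  rw [← smul_set_inter]
  exact hAB.smul_set

end Separation

section ConvergesOff

variable {G X : Type*} [Group G] [MulAction G X] [TopologicalSpace X]

/-- Along the filter `l`, the translates of `A` converge to the attractor `p`, uniformly away from
every neighbourhood of the repeller `n`. -/
def ConvergesOff (l : Filter G) (A : Set X) (n p : X) : Prop :=
  ∀ U ∈ 𝓝 n, ∀ V ∈ 𝓝 p, ∀ᶠ g in l, g • (A \ U) ⊆ V

theorem convSeqOn_iff [T2Space X] {A : Set X} (hA : IsCompact A) {g : ℕ → G} {n p : X} :
    ConvSeqOn A (fun i => (g i • · : X → X)) n p ↔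
      n ∈ A ∧ p ∈ A ∧ ConvergesOff (map g atTop) A n p := by
  refine and_congr_right fun _ => and_congr_right fun _ => ⟨fun h U hU V hV => eventually_map.2 ?_,
    fun h C hCA hC hnC U hU hpU => ?_⟩
  · obtain ⟨U', hU'U, hU', hnU'⟩ := mem_nhds_iff.1 hU
    obtain ⟨V', hV'V, hV', hpV'⟩ := mem_nhds_iff.1 hV
    filter_upwards [h (A \ U') sdiff_subset (hA.diff hU') (fun hn => hn.2 hnU') V' hV' hpV']
      with i hi
    exact (smul_set_mono (sdiff_subset_sdiff_right hU'U)).trans (hi.trans hV'V)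
  · have hconv := h Cᶜ (hC.isClosed.isOpen_compl.mem_nhds hnC) U (hU.mem_nhds hpU)
    rwa [sdiff_compl, inter_eq_self_of_subset_right hCA] at hconv

theorem exists_mem_forall_not_convergesOff {𝒰 : Ultrafilter G} {A : Set X} (hA : IsCompact A)
    (h : ∀ n ∈ A, ∀ p ∈ A, ¬ ConvergesOff (𝒰 : Filter G) A n p) :
    ∃ T ∈ 𝒰, ∀ l : Filter G, l.NeBot → T ∈ l → ∀ n ∈ A, ∀ p ∈ A, ¬ ConvergesOff l A n p := by
  suffices ∃ T ∈ 𝒰, ∀ l : Filter G, l.NeBot → T ∈ l → ∀ q ∈ A ×ˢ A, ¬ ConvergesOff l A q.1 q.2 by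
    obtain ⟨T, hT, hTl⟩ := this
    exact ⟨T, hT, fun l hl hT n hn p hp => hTl l hl hT (n, p) ⟨hn, hp⟩⟩
  refine (hA.prod hA).induction_on
    (p := fun s => ∃ T ∈ 𝒰, ∀ l : Filter G, l.NeBot → T ∈ l → ∀ q ∈ s, ¬ ConvergesOff l A q.1 q.2)
    ⟨univ, univ_mem, by simp⟩ ?_ ?_ ?_
  · rintro s t hst ⟨T, hT, hTl⟩
    exact ⟨T, hT, fun l hl hT q hq => hTl l hl hT q (hst hq)⟩
  · rintro s t ⟨T, hT, hTl⟩ ⟨T', hT', hTl'⟩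
    refine ⟨T ∩ T', inter_mem hT hT', fun l hl hTT' q hq => hq.elim ?_ ?_⟩
    · exact hTl l hl (mem_of_superset hTT' inter_subset_left) q
    · exact hTl' l hl (mem_of_superset hTT' inter_subset_right) q
  · rintro ⟨n, p⟩ ⟨hn, hp⟩
    have hnp := h n hn p hp
    simp only [ConvergesOff, not_forall] at hnp
    obtain ⟨U, hU, V, hV, hUV⟩ := hnp
    refine ⟨_, mem_nhdsWithin_of_mem_nhds (eventually_eventually_nhds.2 (prod_mem_nhds hU hV)),
      {g | ¬ g • (A \ U) ⊆ V}, Ultrafilter.eventually_not.2 hUV, fun l hl hT q hq hconv => ?_⟩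
    have hq : U ∈ 𝓝 q.1 ∧ V ∈ 𝓝 q.2 := prod_mem_nhds_iff.1 hq
    obtain ⟨g, hg, hg'⟩ := ((hconv U hq.1 V hq.2).and hT).exists
    exact hg' hg

theorem ConvGroupOn.exists_convergesOff [T2Space X] {S : Set G} {A : Set X}
    (h : ConvGroupOn S A) (hA : IsCompact A) {𝒰 : Ultrafilter G} (h𝒰 : (𝒰 : Filter G) ≤ cofinite)
    (hS : S ∈ 𝒰) : ∃ n ∈ A, ∃ p ∈ A, ConvergesOff (𝒰 : Filter G) A n p := by
  by_contra! hnone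
  obtain ⟨T, hT, hTl⟩ := exists_mem_forall_not_convergesOff hA hnone
  have hinf : (T ∩ S).Infinite := fun hfin =>
    𝒰.compl_notMem_iff.2 (inter_mem hT hS) (h𝒰 hfin.compl_mem_cofinite)
  let g : ℕ → G := fun i => hinf.natEmbedding _ i
  have hg : ∀ i, g i ∈ T ∩ S := fun i => (hinf.natEmbedding _ i).2
  obtain ⟨k, -, n, p, hnp⟩ := h g (fun i => (hg i).2)
    (Subtype.val_injective.comp (hinf.natEmbedding _).injective)
  obtain ⟨hn, hp, hconv⟩ := (convSeqOn_iff hA).1 hnp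
  exact hTl _ inferInstance (eventually_map.2 (.of_forall fun i => (hg (k i)).1)) n hn p hp hconv

theorem convGroupOn_of_forall_ultrafilter [T2Space X] [FirstCountableTopology X] {S : Set G}
    {A : Set X} (hA : IsCompact A)
    (h : ∀ 𝒰 : Ultrafilter G, (𝒰 : Filter G) ≤ cofinite → S ∈ 𝒰 →
      ∃ n ∈ A, ∃ p ∈ A, ConvergesOff (𝒰 : Filter G) A n p) : ConvGroupOn S A := by
  intro g hgS hg
  obtain ⟨n, hn, p, hp, hconv⟩ := h ((hyperfilter ℕ).map g)
    (hg.tendsto_cofinite.mono_left hyperfilter_le_cofinite) (Ultrafilter.mem_map.2 (univ_mem' hgS))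
  obtain ⟨U, hU⟩ := (𝓝 n).exists_antitone_basis
  obtain ⟨V, hV⟩ := (𝓝 p).exists_antitone_basis
  have hfreq : ∀ k, ∃ᶠ i in atTop, g i • (A \ U k) ⊆ V k := fun k =>
    (eventually_map.1 (hconv (U k) (hU.mem k) (V k) (hV.mem k))).frequently.filter_mono
      Nat.hyperfilter_le_atTop
  obtain ⟨k, hk, hkUV⟩ := extraction_forall_of_frequently hfreq
  refine ⟨k, hk, n, p, (convSeqOn_iff hA).2 ⟨hn, hp, fun U' hU' V' hV' => eventually_map.2 ?_⟩⟩
  filter_upwards [hU.eventually_subset hU', hV.eventually_subset hV'] with j hjU hjV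
  exact (smul_set_mono (sdiff_subset_sdiff_right hjU)).trans ((hkUV j).trans hjV)

end ConvergesOff

section Attractors

variable {G X : Type*} [Group G]

/-- The image of an ultrafilter on a group under inversion; it describes the backward dynamics. -/
instance : InvolutiveInv (Ultrafilter G) where
  inv 𝒰 := 𝒰.map Inv.inv
  inv_inv 𝒰 := Ultrafilter.coe_injective (inv_inv (𝒰 : Filter G))

theorem eventually_ultrafilter_inv {𝒰 : Ultrafilter G} {P : G → Prop} :
    (∀ᶠ g : G in ↑𝒰⁻¹, P g) ↔ ∀ᶠ g : G in 𝒰, P g⁻¹ :=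
  Iff.rfl

theorem ultrafilter_inv_le_cofinite {𝒰 : Ultrafilter G} (h𝒰 : (𝒰 : Filter G) ≤ cofinite) :
    ((𝒰⁻¹ : Ultrafilter G) : Filter G) ≤ cofinite :=
  inv_injective.tendsto_cofinite.mono_left h𝒰

theorem exists_mem_ne_ne {A : Set X} (hA : 2 < A.encard) (a b : X) :
    ∃ x ∈ A, x ≠ a ∧ x ≠ b := by
  obtain ⟨x, hxA, hxab⟩ := not_subset.1 fun hsub : A ⊆ {a, b} =>
    (encard_le_encard hsub).not_gt ((encard_insert_le {b} a).trans_lt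
      (by rwa [encard_singleton, one_add_one_eq_two]))
  exact ⟨x, hxA, by simpa using hxab⟩

variable [MulAction G X] [TopologicalSpace X] {𝒰 : Ultrafilter G} {A A' B : Set X} {n p q : X}

/-- Along `𝒰`, the set `A` is eventually carried onto the fixed set `A'`, and the dynamics from `A`
to `A'` is that of a convergence sequence with repeller `n ∈ A` and attractor `p ∈ A'`. -/
structure IsNorthSouth (𝒰 : Ultrafilter G) (A A' : Set X) (n p : X) : Prop where
  repeller_mem : n ∈ A
  attractor_mem : p ∈ A'
  eventually_smul_eq : ∀ᶠ g : G in 𝒰, g • A = A'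
  convergesOff : ConvergesOff (𝒰 : Filter G) A n p

/-- Along `𝒰`, the translates of the whole set `A` converge to the point `p`. -/
def ShrinksTo (𝒰 : Ultrafilter G) (A : Set X) (p : X) : Prop :=
  Tendsto (fun g : G => g • A) 𝒰 (𝓝 p).smallSets

/-- The translates of `A` along `𝒰` accumulate at `p`, at least away from a repeller; for the
members of a local convergence pairing this happens in one of two ways. -/
def HasAttractor (𝒰 : Ultrafilter G) (A : Set X) (p : X) : Prop :=
  ShrinksTo 𝒰 A p ∨ ∃ A' n, IsNorthSouth 𝒰 A A' n p

/-- The points that are attracted to `p` along `𝒰`. -/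
def basin (𝒰 : Ultrafilter G) (p : X) : Set X :=
  {x | Tendsto (fun g : G => g • x) 𝒰 (𝓝 p)}

theorem ShrinksTo.eventually {V : Set X} (h : ShrinksTo 𝒰 A p) (hV : V ∈ 𝓝 p) :
    ∀ᶠ g : G in 𝒰, g • A ⊆ V :=
  tendsto_smallSets_iff.1 h V hV

theorem ShrinksTo.subset_basin (h : ShrinksTo 𝒰 A p) : A ⊆ basin 𝒰 p := fun _ hx =>
  h.of_smallSets (.of_forall fun _ => smul_mem_smul_set hx)

namespace IsNorthSouth

theorem hasAttractor (h : IsNorthSouth 𝒰 A A' n p) : HasAttractor 𝒰 A p := .inr ⟨A', n, h⟩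

theorem inv (h : IsNorthSouth 𝒰 A A' n p) : IsNorthSouth 𝒰⁻¹ A' A p n where
  repeller_mem := h.attractor_mem
  attractor_mem := h.repeller_mem
  eventually_smul_eq := by
    refine eventually_ultrafilter_inv.2 (h.eventually_smul_eq.mono fun g hg => ?_)
    rw [← hg, inv_smul_smul]
  convergesOff := fun V hV U hU => by
    refine eventually_ultrafilter_inv.2 ?_
    filter_upwards [h.eventually_smul_eq, h.convergesOff U hU V hV] with g hg hUV
    rw [← smul_set_subset_smul_set_iff (a := g), smul_inv_smul, ← hg, sdiff_subset_comm,
      ← smul_set_sdiff]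
    exact hUV

theorem sdiff_subset_basin [T1Space X] (h : IsNorthSouth 𝒰 A A' n p) : A \ {n} ⊆ basin 𝒰 p :=
  fun x hx V hV => (h.convergesOff {x}ᶜ (isOpen_ne.mem_nhds (Ne.symm hx.2)) V hV).mono
    fun _ hg => hg (smul_mem_smul_set ⟨hx.1, not_not.2 rfl⟩)

theorem two_lt_encard (h : IsNorthSouth 𝒰 A A' n p) (hA : 2 < A.encard) : 2 < A'.encard := by
  obtain ⟨g, hg⟩ := h.eventually_smul_eq.exists
  rwa [← hg, encard_smul_set]

theorem image_unique {A'' : Set X} {m : X} (h : IsNorthSouth 𝒰 A A' n p)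
    (h' : IsNorthSouth 𝒰 A A'' m q) : A' = A'' := by
  obtain ⟨g, hg, hg'⟩ := (h.eventually_smul_eq.and h'.eventually_smul_eq).exists
  exact hg.symm.trans hg'

/-- If `n` were isolated in `A`, then all of `A` but one point would eventually be mapped close to
`p`, although `A'` has two points different from `p`. -/
theorem repeller_mem_closure [T1Space X] (h : IsNorthSouth 𝒰 A A' n p) (hA : 2 < A.encard) :
    n ∈ closure (A \ {n}) := by
  by_contra hn
  obtain ⟨y, hy, hyp, -⟩ := exists_mem_ne_ne (h.two_lt_encard hA) p p
  obtain ⟨z, hz, hzp, hzy⟩ := exists_mem_ne_ne (h.two_lt_encard hA) p y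
  have hV : ({y, z}ᶜ : Set X) ∈ 𝓝 p :=
    (toFinite {y, z}).isClosed.isOpen_compl.mem_nhds (by simp [hyp.symm, hzp.symm])
  obtain ⟨g, hgU, hgA⟩ := ((h.convergesOff _ (isClosed_closure.isOpen_compl.mem_nhds hn) _
    hV).and h.eventually_smul_eq).exists
  have hfixed : ∀ w ∈ A', w = y ∨ w = z → w = g • n := by
    intro w hw hwyz
    obtain ⟨x, hx, rfl⟩ := hgA.symm ▸ hw
    by_contra hxn
    have hxn : x ≠ n := fun h => hxn (h ▸ rfl)
    exact hgU (smul_mem_smul_set ⟨hx, not_not.2 (subset_closure ⟨hx, hxn⟩)⟩) hwyz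
  exact hzy ((hfixed z hz (.inr rfl)).trans (hfixed y hy (.inl rfl)).symm)

end IsNorthSouth

namespace HasAttractor

theorem subset_closure_basin [T1Space X] (h : HasAttractor 𝒰 A p) (hA : 2 < A.encard) :
    A ⊆ closure (basin 𝒰 p) := by
  rcases h with h | ⟨A', n, h⟩
  · exact h.subset_basin.trans subset_closure
  · intro x hx
    rcases eq_or_ne x n with rfl | hxn
    · exact closure_mono h.sdiff_subset_basin (h.repeller_mem_closure hA)
    · exact subset_closure (h.sdiff_subset_basin ⟨hx, hxn⟩)

theorem exists_sdiff_subset_basin [T1Space X] (h : HasAttractor 𝒰 A p) :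
    ∃ n, A \ {n} ⊆ basin 𝒰 p := by
  rcases h with h | ⟨A', n, h⟩
  · exact ⟨p, sdiff_subset.trans h.subset_basin⟩
  · exact ⟨n, h.sdiff_subset_basin⟩

theorem unique [T2Space X] (h : HasAttractor 𝒰 A p) (h' : HasAttractor 𝒰 A q)
    (hA : 2 < A.encard) : p = q := by
  obtain ⟨n, hn⟩ := h.exists_sdiff_subset_basin
  obtain ⟨m, hm⟩ := h'.exists_sdiff_subset_basin
  obtain ⟨x, hx, hxn, hxm⟩ := exists_mem_ne_ne hA n m
  exact tendsto_nhds_unique (hn ⟨hx, hxn⟩) (hm ⟨hx, hxm⟩)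

theorem mem_basin_or_isNorthSouth [T1Space X] (h : HasAttractor 𝒰 A p) {x : X} (hx : x ∈ A) :
    x ∈ basin 𝒰 p ∨ ∃ A', IsNorthSouth 𝒰 A A' x p := by
  rcases h with h | ⟨A', n, h⟩
  · exact .inl (h.subset_basin hx)
  · rcases eq_or_ne x n with rfl | hxn
    · exact .inr ⟨A', h⟩
    · exact .inl (h.sdiff_subset_basin ⟨hx, hxn⟩)

theorem exists_isNorthSouth_of_mem_inter [T2Space X] (hA : HasAttractor 𝒰 A p)
    (hB : HasAttractor 𝒰 B q) (hpq : p ≠ q) {x : X} (hx : x ∈ A ∩ B) :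
    (∃ A', IsNorthSouth 𝒰 A A' x p) ∨ ∃ B', IsNorthSouth 𝒰 B B' x q := by
  rcases hA.mem_basin_or_isNorthSouth hx.1 with hxp | hA'
  · rcases hB.mem_basin_or_isNorthSouth hx.2 with hxq | hB'
    · exact absurd (tendsto_nhds_unique hxp hxq) hpq
    · exact .inr hB'
  · exact .inl hA'

end HasAttractor

theorem IsNorthSouth.repeller_unique [T2Space X] {A'' : Set X} {m : X}
    (h : IsNorthSouth 𝒰 A A' n p) (h' : IsNorthSouth 𝒰 A A'' m q) (hA : 2 < A.encard) : n = m := by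
  obtain rfl := h.image_unique h'
  exact h.inv.hasAttractor.unique h'.inv.hasAttractor (h.two_lt_encard hA)

end Attractors

section ExistsAttractor

variable {G X : Type*} [Group G] [MulAction G X] {𝒰 : Ultrafilter G} {A A' : Set X}

theorem ConvGroupOn.exists_isNorthSouth [TopologicalSpace X] [T2Space X] [ContinuousConstSMul G X]
    (hconv : ConvGroupOn (stab G A) A) (h𝒰 : (𝒰 : Filter G) ≤ cofinite) (hA : IsCompact A)
    (hA' : ∀ᶠ g : G in 𝒰, g • A = A') : ∃ n p, IsNorthSouth 𝒰 A A' n p := by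
  obtain ⟨g₀, hg₀⟩ := hA'.exists
  obtain ⟨n, hn, p, hp, hnp⟩ := hconv.exists_convergesOff hA (𝒰 := 𝒰.map (g₀⁻¹ * ·))
    ((mul_right_injective g₀⁻¹).tendsto_cofinite.mono_left h𝒰) <| Ultrafilter.mem_map.2 <|
      hA'.mono fun g hg => by
        change (g₀⁻¹ * g) • A = A
        rw [mul_smul, hg, ← hg₀, inv_smul_smul]
  refine ⟨n, g₀ • p, hn, hg₀ ▸ smul_mem_smul_set hp, hA', fun U hU V hV => ?_⟩
  have hV' : g₀⁻¹ • V ∈ 𝓝 p := by simpa only [inv_smul_smul] using smul_mem_nhds_smul g₀⁻¹ hV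
  filter_upwards [eventually_map.1 (hnp U hU _ hV')] with g hg
  rwa [mul_smul, smul_set_subset_smul_set_iff] at hg

theorem exists_shrinksTo [PseudoMetricSpace X] [CompactSpace X] (hA : A.Nonempty)
    (hdiam : ∀ ε > 0, ∀ᶠ g : G in 𝒰, Metric.diam (g • A) ≤ ε) : ∃ p, ShrinksTo 𝒰 A p := by
  obtain ⟨a, ha⟩ := hA
  obtain ⟨p, hp⟩ : ∃ p, Tendsto (fun g : G => g • a) 𝒰 (𝓝 p) :=
    ⟨_, (𝒰.map fun g : G => g • a).le_nhds_lim⟩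
  refine ⟨p, tendsto_smallSets_iff.2 fun V hV => ?_⟩
  obtain ⟨ε, hε, hεV⟩ := Metric.mem_nhds_iff.1 hV
  filter_upwards [hdiam (ε / 2) (half_pos hε), hp (Metric.ball_mem_nhds p (half_pos hε))]
    with g hg hga
  rintro _ ⟨x, hx, rfl⟩
  refine hεV (Metric.mem_ball.2 ?_)
  calc dist (g • x) p ≤ dist (g • x) (g • a) + dist (g • a) p := dist_triangle _ _ _
    _ < ε / 2 + ε / 2 := add_lt_add_of_le_of_lt ((Metric.dist_le_diam_of_mem
        Metric.isBounded_of_compactSpace (smul_mem_smul_set hx) (smul_mem_smul_set ha)).trans hg)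
        hga
    _ = ε := add_halves ε

theorem IsLocalConvPairing.exists_isNorthSouth [MetricSpace X] [CompactSpace X]
    [ContinuousConstSMul G X] {𝓐 : Set (Set X)} (h : IsLocalConvPairing G 𝓐)
    (h𝒰 : (𝒰 : Filter G) ≤ cofinite) (hA : A ∈ 𝓐) (hA' : ∀ᶠ g : G in 𝒰, g • A = A') :
    ∃ n p, IsNorthSouth 𝒰 A A' n p :=
  (h.stabConv A hA).exists_isNorthSouth h𝒰 (h.closed A hA).isCompact hA'

theorem IsLocalConvPairing.exists_hasAttractor [MetricSpace X] [CompactSpace X]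
    [ContinuousConstSMul G X] {𝓐 : Set (Set X)} (h : IsLocalConvPairing G 𝓐)
    (h𝒰 : (𝒰 : Filter G) ≤ cofinite) (hA : A ∈ 𝓐) : ∃ p, HasAttractor 𝒰 A p := by
  by_cases hconst : ∃ A', ∀ᶠ g : G in 𝒰, g • A = A'
  · obtain ⟨A', hA'⟩ := hconst
    obtain ⟨n, p, hnp⟩ := h.exists_isNorthSouth h𝒰 hA hA'
    exact ⟨p, hnp.hasAttractor⟩
  · have hne : A.Nonempty := encard_pos.1 (pos_of_gt (h.big A hA))
    obtain ⟨p, hp⟩ := exists_shrinksTo (𝒰 := 𝒰) hne fun ε hε => by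
      by_contra hdiam
      obtain ⟨A', -, hA'⟩ := (Ultrafilter.eventually_exists_mem_iff (h.null ε hε)
        (P := fun A' (g : G) => g • A = A') (f := 𝒰)).1 <| by
          filter_upwards [Ultrafilter.eventually_not.2 hdiam] with g hg
          exact ⟨_, ⟨h.invariant g A hA, not_le.1 hg⟩, rfl⟩
      exact hconst ⟨A', hA'⟩
    exact ⟨p, .inl hp⟩

end ExistsAttractor

section EventuallyAvoids

variable {G X : Type*} [Group G] [MulAction G X] [TopologicalSpace X] {𝒰 : Ultrafilter G}
  {A A' B E : Set X} {a b c n p q : X}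

/-- Along `𝒰`, the translates of `B` stay away from a neighbourhood of `p`. -/
def EventuallyAvoids (𝒰 : Ultrafilter G) (B : Set X) (p : X) : Prop :=
  ∃ O ∈ 𝓝 p, ∀ᶠ g : G in 𝒰, Disjoint (g • B) O

namespace EventuallyAvoids

theorem exists_isPreconnected [LocallyConnectedSpace X] (h : EventuallyAvoids 𝒰 B p) :
    ∃ O ∈ 𝓝 p, IsPreconnected O ∧ ∀ᶠ g : G in 𝒰, Disjoint (g • B) O := by
  obtain ⟨O, hO, hBO⟩ := h
  exact ⟨_, connectedComponentIn_mem_nhds hO, isPreconnected_connectedComponentIn,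
    hBO.mono fun g hg => hg.mono_right (connectedComponentIn_subset O p)⟩

theorem sUnion {𝓑 : Set (Set X)} (h𝓑 : 𝓑.Finite) (h : ∀ B ∈ 𝓑, EventuallyAvoids 𝒰 B p) :
    EventuallyAvoids 𝒰 (⋃₀ 𝓑) p := by
  choose! O hO hBO using h
  refine ⟨⋂ B ∈ 𝓑, O B, (biInter_mem h𝓑).2 hO, ?_⟩
  filter_upwards [(eventually_all_finite h𝓑).2 hBO] with g hg
  rw [smul_set_sUnion, disjoint_iUnion₂_left]
  exact fun B hB => (hg B hB).mono_right (biInter_subset_of_mem hB)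

theorem not_sepPts_of_mem_closure_basin [LocallyConnectedSpace X] [ContinuousConstSMul G X]
    (h : EventuallyAvoids 𝒰 E p) (hE : IsClosed E) (ha : a ∈ closure (basin 𝒰 p))
    (hb : b ∈ closure (basin 𝒰 p)) : ¬ SepPts E a b := by
  intro hab
  obtain ⟨O, hO, hOc, hEO⟩ := h.exists_isPreconnected
  have hab' : (a, b) ∈ closure (basin 𝒰 p ×ˢ basin 𝒰 p) := by
    rw [closure_prod_eq]
    exact ⟨ha, hb⟩
  obtain ⟨⟨x, y⟩, hxy, hx, hy⟩ := mem_closure_iff_nhds.1 hab' _ (hab.eventually hE)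
  obtain ⟨g, hg, hgx, hgy⟩ := (hEO.and ((hx.eventually hO).and (hy.eventually hO))).exists
  exact (SepPts.smul hxy g).notMem_of_isPreconnected hOc hg hgx hgy

theorem not_sepPts_of_mem_closure_inv [LocallyConnectedSpace X] [ContinuousConstSMul G X]
    (h : EventuallyAvoids 𝒰⁻¹ E c) (hE : IsClosed E) (ha : c ∈ closure (basin 𝒰 a))
    (hb : c ∈ closure (basin 𝒰 b)) : ¬ SepPts E a b := by
  intro hab
  obtain ⟨O, hO, hOc, hEO⟩ := h.exists_isPreconnected
  obtain ⟨x, hxO, hx⟩ := mem_closure_iff_nhds.1 ha O hO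
  obtain ⟨y, hyO, hy⟩ := mem_closure_iff_nhds.1 hb O hO
  obtain ⟨g, hg, hxy⟩ := ((eventually_ultrafilter_inv.1 hEO).and
    ((hx.prodMk_nhds hy).eventually (hab.eventually hE))).exists
  have hsep := hxy.smul g⁻¹
  rw [inv_smul_smul, inv_smul_smul] at hsep
  exact hsep.notMem_of_isPreconnected hOc hg hxO hyO

end EventuallyAvoids

theorem ShrinksTo.eventuallyAvoids [T2Space X] (h : ShrinksTo 𝒰 A q) (hpq : p ≠ q) :
    EventuallyAvoids 𝒰 A p := by
  obtain ⟨O, hO, V, hV, hOV⟩ := Filter.disjoint_iff.1 (disjoint_nhds_nhds.2 hpq)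
  exact ⟨O, hO, (h.eventually hV).mono fun g hg => (hOV.mono_right hg).symm⟩

theorem eventuallyAvoids_of_eventually_smul_eq [ContinuousConstSMul G X] (hA : IsClosed A)
    (hA' : ∀ᶠ g : G in 𝒰, g • A = A') (hp : p ∉ A') : EventuallyAvoids 𝒰 A p := by
  obtain ⟨g, hg⟩ := hA'.exists
  exact ⟨A'ᶜ, (hg ▸ hA.smul g).isOpen_compl.mem_nhds hp,
    hA'.mono fun g hg => hg ▸ disjoint_compl_right⟩

namespace HasAttractor

variable [T2Space X] [ContinuousConstSMul G X]

theorem eventuallyAvoids (h : HasAttractor 𝒰 A q) (hA : IsClosed A) (hpq : p ≠ q)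
    (hp : ∀ A', (∀ᶠ g : G in 𝒰, g • A = A') → p ∉ A') : EventuallyAvoids 𝒰 A p := by
  rcases h with h | ⟨A', n, h⟩
  · exact h.eventuallyAvoids hpq
  · exact eventuallyAvoids_of_eventually_smul_eq hA h.eventually_smul_eq
      (hp A' h.eventually_smul_eq)

variable [LocallyConnectedSpace X]

theorem not_sepSet (hp : HasAttractor 𝒰 A p) (hA : 2 < A.encard) (hB : IsClosed B)
    (hBp : EventuallyAvoids 𝒰 B p) : ¬ SepSet B A := fun hsep =>
  let ⟨_, hx, _, hy, hxy⟩ := hsep.exists_sepPts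
  hBp.not_sepPts_of_mem_closure_basin hB (hp.subset_closure_basin hA hx)
    (hp.subset_closure_basin hA hy) hxy

theorem inter_nonempty_of_crosses (hp : HasAttractor 𝒰 A p) (hq : HasAttractor 𝒰 B q)
    (hpq : p ≠ q) (hA : 2 < A.encard) (hAc : IsClosed A) (hB : 2 < B.encard) (hBc : IsClosed B)
    (hcross : Crosses A B) : (A ∩ B).Nonempty := by
  rcases hcross with hne | ⟨hsepB, hsepA⟩
  · exact hne
  by_cases hpB : ∀ B', (∀ᶠ g : G in 𝒰, g • B = B') → p ∉ B'
  · exact absurd hsepA (hp.not_sepSet hA hBc (hq.eventuallyAvoids hBc hpq hpB))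
  push Not at hpB
  obtain ⟨B', hB', hpB'⟩ := hpB
  rcases hp with hp | ⟨A', n, hp⟩
  · exact absurd hsepB (hq.not_sepSet hB hAc (hp.eventuallyAvoids hpq.symm))
  obtain ⟨g, hgA, hgB⟩ := (hp.eventually_smul_eq.and hB').exists
  have hmeet : (g • A ∩ g • B).Nonempty := ⟨p, hgA ▸ hp.attractor_mem, hgB ▸ hpB'⟩
  rwa [← smul_set_inter, smul_set_nonempty] at hmeet

end HasAttractor

end EventuallyAvoids

section FiniteIntersections

variable {G X : Type*} [Group G] [MulAction G X] {𝒰 : Ultrafilter G} {A B C C' : Set X}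
  {𝓐 𝓑 : Set (Set X)} {a b n p q r : X}

/-- The points which attract some member of `𝓑` under the backward dynamics. -/
def backwardAttractors [TopologicalSpace X] (𝒰 : Ultrafilter G) (𝓑 : Set (Set X)) : Set X :=
  {n | ∃ B ∈ 𝓑, HasAttractor 𝒰⁻¹ B n}

/-- The sets which are eventually carried onto some fixed member of `𝓑`. -/
def sources (𝒰 : Ultrafilter G) (𝓑 : Set (Set X)) : Set (Set X) :=
  {C | ∃ B ∈ 𝓑, ∀ᶠ g : G in 𝒰, g • C = B}

theorem finite_backwardAttractors [TopologicalSpace X] [T2Space X] (h𝓑 : 𝓑.Finite)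
    (hbig : ∀ B ∈ 𝓑, 2 < B.encard) : (backwardAttractors 𝒰 𝓑).Finite := by
  have heq : backwardAttractors 𝒰 𝓑 = ⋃ B ∈ 𝓑, {n | HasAttractor 𝒰⁻¹ B n} := by
    ext n
    simp only [backwardAttractors, mem_ofPred_eq, mem_iUnion, exists_prop]
  rw [heq]
  exact h𝓑.biUnion fun B hB => Subsingleton.finite fun n hn m hm => hn.unique hm (hbig B hB)

theorem finite_sources (h𝓑 : 𝓑.Finite) : (sources 𝒰 𝓑).Finite := by
  have heq : sources 𝒰 𝓑 = ⋃ B ∈ 𝓑, {C | ∀ᶠ g : G in 𝒰, g • C = B} := by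
    ext C
    simp only [sources, mem_ofPred_eq, mem_iUnion, exists_prop]
  rw [heq]
  refine h𝓑.biUnion fun B _ => Subsingleton.finite fun C hC D hD => ?_
  obtain ⟨g, hgC, hgD⟩ := (hC.and hD).exists
  exact MulAction.injective g (hgC.trans hgD.symm)

theorem isClosed_sUnion_of_finite [TopologicalSpace X] (h𝓑 : 𝓑.Finite)
    (hclosed : ∀ B ∈ 𝓑, IsClosed B) : IsClosed (⋃₀ 𝓑) := by
  rw [sUnion_eq_biUnion]
  exact h𝓑.isClosed_biUnion hclosed

theorem inter_subset_of_sepPts_sUnion [TopologicalSpace X] [T2Space X] [LocallyConnectedSpace X]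
    [ContinuousConstSMul G X] (h𝓑 : 𝓑.Finite) (hclosed : ∀ B ∈ 𝓑, IsClosed B)
    (hback : ∀ B ∈ 𝓑, ∃ n, HasAttractor 𝒰⁻¹ B n) (hab : SepPts (⋃₀ 𝓑) a b)
    (hA : HasAttractor 𝒰 A a) (hAbig : 2 < A.encard) (hB : HasAttractor 𝒰 B b)
    (hBbig : 2 < B.encard) : A ∩ B ⊆ backwardAttractors 𝒰 𝓑 ∪ ⋃₀ sources 𝒰 𝓑 := by
  intro c hc
  by_contra hcN
  rw [mem_union, not_or] at hcN
  have havoid : EventuallyAvoids 𝒰⁻¹ (⋃₀ 𝓑) c := by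
    refine .sUnion h𝓑 fun D hD => ?_
    obtain ⟨m, hm⟩ := hback D hD
    refine hm.eventuallyAvoids (hclosed D hD) (fun hcm => hcN.1 ⟨D, hD, hcm ▸ hm⟩) fun C hC hcC =>
      hcN.2 ⟨C, ⟨D, hD, (eventually_ultrafilter_inv.1 hC).mono fun g hg => ?_⟩, hcC⟩
    rw [← hg, smul_inv_smul]
  exact havoid.not_sepPts_of_mem_closure_inv (isClosed_sUnion_of_finite h𝓑 hclosed)
    (hA.subset_closure_basin hAbig hc.1) (hB.subset_closure_basin hBbig hc.2) hab

namespace IsLocalConvPairing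

theorem sources_subset [MetricSpace X] (h : IsLocalConvPairing G 𝓐) (h𝓑 : 𝓑 ⊆ 𝓐) :
    sources 𝒰 𝓑 ⊆ 𝓐 := by
  rintro C ⟨B, hB, hCB⟩
  obtain ⟨g, hg⟩ := hCB.exists
  rw [← inv_smul_smul g C, hg]
  exact h.invariant g⁻¹ B (h𝓑 hB)

variable [MetricSpace X] [CompactSpace X] [LocallyConnectedSpace X] [ContinuousConstSMul G X]

theorem exists_finite_eventually_inter_subset_union (h : IsLocalConvPairing G 𝓐)
    (h𝒰 : (𝒰 : Filter G) ≤ cofinite) (hpq : p ≠ q) :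
    ∃ 𝓑 ⊆ 𝓐, 𝓑.Finite ∧ p ∉ ⋃₀ 𝓑 ∧ q ∉ ⋃₀ 𝓑 ∧ ∀ᶠ z in 𝓝 (p, q), ∀ A ∈ 𝓐, ∀ B ∈ 𝓐,
      HasAttractor 𝒰 A z.1 → HasAttractor 𝒰 B z.2 →
        A ∩ B ⊆ backwardAttractors 𝒰 𝓑 ∪ ⋃₀ sources 𝒰 𝓑 := by
  obtain ⟨𝓑, h𝓑, hfin, hsep⟩ := h.fine p q hpq
  have hclosed : ∀ B ∈ 𝓑, IsClosed B := fun B hB => h.closed B (h𝓑 hB)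
  refine ⟨𝓑, h𝓑, hfin, hsep.1, hsep.2.1, ?_⟩
  filter_upwards [hsep.eventually (isClosed_sUnion_of_finite hfin hclosed)]
    with z hz A hA B hB hAz hBz
  exact inter_subset_of_sepPts_sUnion hfin hclosed
    (fun D hD => h.exists_hasAttractor (ultrafilter_inv_le_cofinite h𝒰) (h𝓑 hD)) hz hAz
    (h.big A hA) hBz (h.big B hB)

theorem exists_finite_inter_isNorthSouth_subset (h : IsLocalConvPairing G 𝓐)
    (h𝒰 : (𝒰 : Filter G) ≤ cofinite) (hC : C ∈ 𝓐) (hCr : IsNorthSouth 𝒰 C C' n r) (hpr : p ≠ r) :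
    ∃ N : Set X, N.Finite ∧ ∀ᶠ a in 𝓝 p, ∀ A ∈ 𝓐, HasAttractor 𝒰 A a → A ∩ C ⊆ N := by
  obtain ⟨𝓓, h𝓓, hfin, -, hr𝓓, hinter⟩ := h.exists_finite_eventually_inter_subset_union h𝒰 hpr
  refine ⟨insert n (backwardAttractors 𝒰 𝓓),
    (finite_backwardAttractors hfin fun D hD => h.big D (h𝓓 hD)).insert n, ?_⟩
  filter_upwards [(Continuous.prodMk_left r).continuousAt.eventually hinter]
    with a ha A hA hAa c hc
  rcases ha A hA C hC hAa hCr.hasAttractor hc with hcn | ⟨D, ⟨E, hE, hDE⟩, hcD⟩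
  · exact .inr hcn
  obtain ⟨m, s, hDs⟩ := h.exists_isNorthSouth h𝒰 (h.sources_subset h𝓓 ⟨E, hE, hDE⟩) hDE
  have hrs : r ≠ s := fun hrs => hr𝓓 ⟨E, hE, hrs ▸ hDs.attractor_mem⟩
  rcases hCr.hasAttractor.exists_isNorthSouth_of_mem_inter hDs.hasAttractor hrs ⟨hc.2, hcD⟩ with
    ⟨C'', hcC⟩ | ⟨E', hcD⟩
  · exact .inl (hcC.repeller_unique hCr (h.big C hC))
  · exact .inr ⟨E, hE, (hDs.image_unique hcD ▸ hcD.inv).hasAttractor⟩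

theorem exists_finite_eventually_inter_subset (h : IsLocalConvPairing G 𝓐)
    (h𝒰 : (𝒰 : Filter G) ≤ cofinite) (hpq : p ≠ q) :
    ∃ N : Set X, N.Finite ∧ ∀ᶠ z in 𝓝 (p, q), ∀ A ∈ 𝓐, ∀ B ∈ 𝓐,
      HasAttractor 𝒰 A z.1 → HasAttractor 𝒰 B z.2 → A ∩ B ⊆ N := by
  obtain ⟨𝓑, h𝓑, hfin, hp𝓑, -, hinter⟩ := h.exists_finite_eventually_inter_subset_union h𝒰 hpq
  have hsource : ∀ C ∈ sources 𝒰 𝓑, ∃ N : Set X, N.Finite ∧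
      ∀ᶠ a in 𝓝 p, ∀ A ∈ 𝓐, HasAttractor 𝒰 A a → A ∩ C ⊆ N := by
    rintro C ⟨B, hB, hCB⟩
    have hC : C ∈ 𝓐 := h.sources_subset h𝓑 ⟨B, hB, hCB⟩
    obtain ⟨n, r, hCr⟩ := h.exists_isNorthSouth h𝒰 hC hCB
    exact h.exists_finite_inter_isNorthSouth_subset h𝒰 hC hCr
      fun hpr => hp𝓑 ⟨B, hB, hpr ▸ hCr.attractor_mem⟩
  choose! N hN hinterN using hsource
  refine ⟨backwardAttractors 𝒰 𝓑 ∪ ⋃ C ∈ sources 𝒰 𝓑, N C,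
    (finite_backwardAttractors hfin fun B hB => h.big B (h𝓑 hB)).union
      ((finite_sources hfin).biUnion hN), ?_⟩
  filter_upwards [hinter, continuousAt_fst.eventually
    ((eventually_all_finite (finite_sources hfin)).2 hinterN)] with z hz hzN A hA B hB hAz hBz c hc
  rcases hz A hA B hB hAz hBz hc with hcn | ⟨C, hC, hcC⟩
  · exact .inl hcn
  · exact .inr (mem_biUnion hC (hzN C hC A hA hAz ⟨hc.1, hcC⟩))

end IsLocalConvPairing

end FiniteIntersections

section BackwardLimits

variable {G X : Type*} [Group G] [MulAction G X] {𝒰 : Ultrafilter G} {A A' B D : Set X}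
  {𝓐 : Set (Set X)} {b n m p : X}

/-- The point that is eventually mapped to `p` along `𝒰`, if there is one. -/
def eventualFiber (𝒰 : Ultrafilter G) (p : X) : Set X :=
  {r | ∀ᶠ g : G in 𝒰, g • r = p}

theorem subsingleton_eventualFiber : (eventualFiber 𝒰 p).Subsingleton := fun _ hr _ hs =>
  let ⟨g, hgr, hgs⟩ := (hr.and hs).exists
  MulAction.injective g (hgr.trans hgs.symm)

theorem eventualFiber_subset (hA : ∀ᶠ g : G in 𝒰, g • A = A') (hp : p ∈ A') :
    eventualFiber 𝒰 p ⊆ A := fun r hr => by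
  obtain ⟨g, hgr, hgA⟩ := (Eventually.and hr hA).exists
  rwa [← smul_mem_smul_set_iff (a := g), hgr, hgA]

variable [TopologicalSpace X]

/-- The point `n` is the limit, as `g` runs along `𝒰`, of the attractors of the translates `g • A`
under the backward dynamics. -/
def BackwardLimit (𝒰 : Ultrafilter G) (A : Set X) (n : X) : Prop :=
  ∃ c : G → X, (∀ᶠ g : G in 𝒰, HasAttractor 𝒰⁻¹ (g • A) (c g)) ∧ Tendsto c 𝒰 (𝓝 n)

/-- The relation between members of `𝓐` which cross without meeting in the set `D`. -/
def CrossesOff (𝓐 : Set (Set X)) (D A B : Set X) : Prop :=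
  A ∈ 𝓐 ∧ B ∈ 𝓐 ∧ Crosses A B ∧ Disjoint (A ∩ B) D

theorem BackwardLimit.unique [T2Space X] (h : BackwardLimit 𝒰 A n) (h' : BackwardLimit 𝒰 A m)
    (hA : 2 < A.encard) : n = m := by
  obtain ⟨c, hc, hcn⟩ := h
  obtain ⟨d, hd, hdm⟩ := h'
  refine tendsto_nhds_unique_of_eventuallyEq hcn hdm ?_
  filter_upwards [hc, hd] with g hg hg'
  exact hg.unique hg' (by rwa [encard_smul_set])

theorem IsNorthSouth.backwardLimit (h : IsNorthSouth 𝒰 A A' n p) : BackwardLimit 𝒰 A n :=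
  ⟨fun _ => n, h.eventually_smul_eq.mono fun _ hg => hg ▸ h.inv.hasAttractor, tendsto_const_nhds⟩

theorem HasAttractor.mem_basin_of_ne_backwardLimit [T2Space X] (hp : HasAttractor 𝒰 A p)
    (hn : BackwardLimit 𝒰 A n) (hA : 2 < A.encard) (hb : b ∈ A) (hbn : b ≠ n) : b ∈ basin 𝒰 p :=
  (hp.mem_basin_or_isNorthSouth hb).resolve_right
    fun ⟨_, h⟩ => hbn (h.backwardLimit.unique hn hA)

theorem eventualFiber_subset_basin : eventualFiber 𝒰 p ⊆ basin 𝒰 p := fun _ hr =>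
  tendsto_const_nhds.congr' (hr.mono fun _ hg => hg.symm)

theorem CrossesOff.symm (h : CrossesOff 𝓐 D A B) : CrossesOff 𝓐 D B A :=
  ⟨h.2.1, h.1, h.2.2.1.symm, inter_comm A B ▸ h.2.2.2⟩

theorem CrossSeqAvoiding.reflTransGen (h : CrossSeqAvoiding 𝓐 A B D) :
    Relation.ReflTransGen (CrossesOff 𝓐 D) A B := by
  obtain ⟨N, hN, c, rfl, rfl, hc, hcross, havoid⟩ := h
  have hstep : ∀ i ≤ N, CrossesOff 𝓐 D (c i) (c (i + 1)) := fun i hi => by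
    refine ⟨hc i (by lia), hc (i + 1) (by lia), hcross i hi, ?_⟩
    rcases Nat.eq_zero_or_pos i with rfl | hpos
    · exact (disjoint_iff_inter_eq_empty.2 (havoid 1 le_rfl hN)).mono_left inter_subset_right
    · exact (disjoint_iff_inter_eq_empty.2 (havoid i hpos hi)).mono_left inter_subset_left
  have hchain : ∀ i ≤ N + 1, Relation.ReflTransGen (CrossesOff 𝓐 D) (c 0) (c i) := by
    intro i
    induction i with
    | zero => exact fun _ => .refl
    | succ i ih => exact fun hi => (ih (by lia)).tail (hstep i (by lia))
  exact hchain (N + 1) le_rfl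

end BackwardLimits

section Propagation

variable {G X : Type*} [Group G] [MulAction G X] [MetricSpace X] [CompactSpace X]
  [ContinuousConstSMul G X] {𝒰 : Ultrafilter G} {A B D : Set X} {𝓐 : Set (Set X)} {m n p : X}

namespace IsLocalConvPairing

theorem exists_backwardLimit (h : IsLocalConvPairing G 𝓐) (h𝒰 : (𝒰 : Filter G) ≤ cofinite)
    (hA : A ∈ 𝓐) : ∃ n, BackwardLimit 𝒰 A n := by
  choose c hc using fun g : G =>
    h.exists_hasAttractor (ultrafilter_inv_le_cofinite h𝒰) (h.invariant g A hA)
  exact ⟨_, c, .of_forall hc, (𝒰.map c).le_nhds_lim⟩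

variable [LocallyConnectedSpace X]

theorem exists_mem_eventualFiber (h : IsLocalConvPairing G 𝓐)
    (h𝒰 : (𝒰 : Filter G) ≤ cofinite) (hA : A ∈ 𝓐) (hB : B ∈ 𝓐) (hAB : Crosses A B)
    (hn : BackwardLimit 𝒰 A n) (hm : BackwardLimit 𝒰 B m) (hnm : n ≠ m) :
    ∃ e ∈ A ∩ B, ∃ e₀, e ∈ eventualFiber 𝒰 e₀ := by
  obtain ⟨c, hc, hcn⟩ := hn
  obtain ⟨d, hd, hdm⟩ := hm
  obtain ⟨N, hN, hsub⟩ :=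
    h.exists_finite_eventually_inter_subset (ultrafilter_inv_le_cofinite h𝒰) hnm
  have hmeet : ∀ᶠ g : G in 𝒰, (A ∩ B).Nonempty ∧ g • (A ∩ B) ⊆ N := by
    filter_upwards [hc, hd, (hcn.prodMk_nhds hdm).eventually hsub,
      (hcn.prodMk_nhds hdm).eventually
        ((isOpen_ne_fun continuous_fst continuous_snd).mem_nhds hnm)]
      with g hcg hdg hgN hne
    have hgA := h.invariant g A hA
    have hgB := h.invariant g B hB
    have hgAB := hcg.inter_nonempty_of_crosses hdg hne (h.big _ hgA) (h.closed _ hgA)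
      (h.big _ hgB) (h.closed _ hgB) (hAB.smul g)
    rw [← smul_set_inter, smul_set_nonempty] at hgAB
    exact ⟨hgAB, smul_set_inter.trans_subset (hgN _ hgA _ hgB hcg hdg)⟩
  obtain ⟨-, ⟨e, he⟩, -⟩ := hmeet.exists
  obtain ⟨e₀, -, he₀⟩ := (Ultrafilter.eventually_exists_mem_iff hN
    (P := fun e₀ (g : G) => g • e = e₀) (f := 𝒰)).1 <|
      hmeet.mono fun g hg => ⟨g • e, hg.2 (smul_mem_smul_set he), rfl⟩
  exact ⟨e, he, e₀, he₀⟩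

theorem backwardLimit_of_crossesOff (h : IsLocalConvPairing G 𝓐)
    (h𝒰 : (𝒰 : Filter G) ≤ cofinite) (hnD : n ∈ D) (hpD : eventualFiber 𝒰 p ⊆ D)
    (hAB : CrossesOff 𝓐 D A B) (hp : HasAttractor 𝒰 A p) (hn : BackwardLimit 𝒰 A n) :
    BackwardLimit 𝒰 B n := by
  obtain ⟨hA, hB, hcross, hdisj⟩ := hAB
  obtain ⟨m, hm⟩ := h.exists_backwardLimit h𝒰 hB
  rcases eq_or_ne n m with rfl | hnm
  · exact hm
  obtain ⟨e, he, e₀, he₀⟩ := h.exists_mem_eventualFiber h𝒰 hA hB hcross hn hm hnm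
  have hen : e ≠ n := fun hen => disjoint_left.1 hdisj he (hen ▸ hnD)
  obtain rfl : e₀ = p := tendsto_nhds_unique (eventualFiber_subset_basin he₀)
    (hp.mem_basin_of_ne_backwardLimit hn (h.big A hA) he.1 hen)
  exact absurd (hpD he₀) (disjoint_left.1 hdisj he)

theorem hasAttractor_of_crossesOff (h : IsLocalConvPairing G 𝓐)
    (h𝒰 : (𝒰 : Filter G) ≤ cofinite) (hnD : n ∈ D) (hAB : CrossesOff 𝓐 D A B)
    (hp : HasAttractor 𝒰 A p) (hn : BackwardLimit 𝒰 A n) (hn' : BackwardLimit 𝒰 B n) :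
    HasAttractor 𝒰 B p := by
  obtain ⟨hA, hB, hcross, hdisj⟩ := hAB
  obtain ⟨q, hq⟩ := h.exists_hasAttractor h𝒰 hB
  rcases eq_or_ne p q with rfl | hpq
  · exact hq
  obtain ⟨c, hc⟩ := hp.inter_nonempty_of_crosses hq hpq (h.big A hA) (h.closed A hA)
    (h.big B hB) (h.closed B hB) hcross
  have hcn : c ≠ n := fun hcn => disjoint_left.1 hdisj hc (hcn ▸ hnD)
  exact absurd (tendsto_nhds_unique
    (hp.mem_basin_of_ne_backwardLimit hn (h.big A hA) hc.1 hcn)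
    (hq.mem_basin_of_ne_backwardLimit hn' (h.big B hB) hc.2 hcn)) hpq

theorem hasAttractor_of_reflTransGen_crossesOff (h : IsLocalConvPairing G 𝓐)
    (h𝒰 : (𝒰 : Filter G) ≤ cofinite) (hnD : n ∈ D) (hpD : eventualFiber 𝒰 p ⊆ D)
    (hBA : Relation.ReflTransGen (CrossesOff 𝓐 D) B A) (hp : HasAttractor 𝒰 A p)
    (hn : BackwardLimit 𝒰 A n) : HasAttractor 𝒰 B p := by
  suffices HasAttractor 𝒰 B p ∧ BackwardLimit 𝒰 B n from this.1
  induction hBA using Relation.ReflTransGen.head_induction_on with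
  | refl => exact ⟨hp, hn⟩
  | head hstep _ ih =>
    have hn' := h.backwardLimit_of_crossesOff h𝒰 hnD hpD hstep.symm ih.1 ih.2
    exact ⟨h.hasAttractor_of_crossesOff h𝒰 hnD hstep.symm ih.1 ih.2 hn', hn'⟩

end IsLocalConvPairing

end Propagation

section UniqueAttractor

variable {G X : Type*} [Group G] [MulAction G X] {𝒰 : Ultrafilter G} {A A' B D : Set X}
  {𝓐 : Set (Set X)} {d n p q : X}

namespace IsNorthSouth

variable [TopologicalSpace X]

theorem exists_eventualFiber_subset_pair (hA : IsNorthSouth 𝒰 A A' n p) (hAbig : 2 < A.encard) :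
    ∃ b ∈ A, b ≠ n ∧ eventualFiber 𝒰 p ⊆ {b, n} := by
  by_cases hr : ∃ r ∈ eventualFiber 𝒰 p, r ≠ n
  · obtain ⟨r, hr, hrn⟩ := hr
    exact ⟨r, eventualFiber_subset hA.eventually_smul_eq hA.attractor_mem hr, hrn,
      fun s hs => .inl (subsingleton_eventualFiber hs hr)⟩
  · push Not at hr
    obtain ⟨b, hb, hbn, -⟩ := exists_mem_ne_ne hAbig n n
    exact ⟨b, hb, hbn, fun s hs => .inr (hr s hs)⟩

variable [T2Space X]

theorem of_mem_inter_of_ne (hA : IsNorthSouth 𝒰 A A' n p) (hAbig : 2 < A.encard)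
    (hB : HasAttractor 𝒰 B q) (hpq : p ≠ q) (hd : d ∈ A ∩ B) (hdn : d ≠ n) :
    ∃ B', IsNorthSouth 𝒰 B B' d q :=
  (hA.hasAttractor.exists_isNorthSouth_of_mem_inter hB hpq hd).resolve_left
    fun ⟨_, hd⟩ => hdn (hd.repeller_unique hA hAbig)

theorem encard_inter_le_two (hA : IsNorthSouth 𝒰 A A' n p) (hAbig : 2 < A.encard)
    (hB : HasAttractor 𝒰 B q) (hBbig : 2 < B.encard) (hpq : p ≠ q) : (A ∩ B).encard ≤ 2 := by
  by_contra! hlt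
  obtain ⟨d, hd, hdn, -⟩ := exists_mem_ne_ne hlt n n
  obtain ⟨e, he, hen, hed⟩ := exists_mem_ne_ne hlt n d
  obtain ⟨_, hd'⟩ := hA.of_mem_inter_of_ne hAbig hB hpq hd hdn
  obtain ⟨_, he'⟩ := hA.of_mem_inter_of_ne hAbig hB hpq he hen
  exact hed (he'.repeller_unique hd' hBbig)

theorem eventualFiber_subset_inter [ContinuousConstSMul G X] (hA : IsNorthSouth 𝒰 A A' n p)
    (hAbig : 2 < A.encard) (hB : HasAttractor 𝒰 B q) (hBc : IsClosed B) (hpq : p ≠ q)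
    (hd : d ∈ A ∩ B) (hdn : d ≠ n) : eventualFiber 𝒰 p ⊆ B ∩ A := by
  obtain ⟨B', hB'⟩ := hA.of_mem_inter_of_ne hAbig hB hpq hd hdn
  have hpB' : p ∈ B' := by
    obtain ⟨g, hg⟩ := hB'.eventually_smul_eq.exists
    exact (hg ▸ hBc.smul g : IsClosed B').mem_of_tendsto (hA.sdiff_subset_basin ⟨hd.1, hdn⟩)
      (hB'.eventually_smul_eq.mono fun g hg => hg ▸ smul_mem_smul_set hd.2)
  exact subset_inter (eventualFiber_subset hB'.eventually_smul_eq hpB')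
    (eventualFiber_subset hA.eventually_smul_eq hA.attractor_mem)

end IsNorthSouth

namespace IsLocalConvPairing

variable [MetricSpace X] [ContinuousConstSMul G X]

theorem exists_crossSeqAvoiding (h : IsLocalConvPairing G 𝓐) (hA : A ∈ 𝓐) (hB : B ∈ 𝓐)
    (hp : IsNorthSouth 𝒰 A A' n p) (hq : HasAttractor 𝒰 B q) (hpq : p ≠ q) (hnB : n ∈ B) :
    ∃ D, n ∈ D ∧ eventualFiber 𝒰 p ⊆ D ∧ CrossSeqAvoiding 𝓐 B A D := by
  obtain ⟨hpoint, hmany⟩ := h.connect B hB A hA <|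
    inter_comm A B ▸ hp.encard_inter_le_two (h.big A hA) hq (h.big B hB) hpq
  by_cases hn : B ∩ A = {n}
  · obtain ⟨b, hb, hbn, hsub⟩ := hp.exists_eventualFiber_subset_pair (h.big A hA)
    exact ⟨{b, n}, .inr rfl, hsub, hpoint n hn b hb hbn⟩
  · have hnBA : n ∈ B ∩ A := ⟨hnB, hp.repeller_mem⟩
    obtain ⟨d, hd, hdn⟩ : ∃ d ∈ B ∩ A, d ≠ n := by
      by_contra! hall
      exact hn (eq_singleton_iff_unique_mem.2 ⟨hnBA, hall⟩)
    refine ⟨B ∩ A, hnBA, hp.eventualFiber_subset_inter (h.big A hA) hq (h.closed B hB) hpq hd.symm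
      hdn, hmany fun ⟨c, hc⟩ => hn ?_⟩
    rw [hc, mem_singleton_iff.1 (hc.subset hnBA)]

variable [CompactSpace X] [LocallyConnectedSpace X]

theorem attractor_eq_of_repeller_mem (h : IsLocalConvPairing G 𝓐)
    (h𝒰 : (𝒰 : Filter G) ≤ cofinite) (hA : A ∈ 𝓐) (hB : B ∈ 𝓐) (hp : IsNorthSouth 𝒰 A A' n p)
    (hq : HasAttractor 𝒰 B q) (hnB : n ∈ B) : p = q := by
  by_contra hpq
  obtain ⟨D, hnD, hpD, hBA⟩ := h.exists_crossSeqAvoiding hA hB hp hq hpq hnB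
  exact hpq ((h.hasAttractor_of_reflTransGen_crossesOff h𝒰 hnD hpD hBA.reflTransGen hp.hasAttractor
    hp.backwardLimit).unique hq (h.big B hB))

theorem attractor_eq_of_crosses (h : IsLocalConvPairing G 𝓐)
    (h𝒰 : (𝒰 : Filter G) ≤ cofinite) (hA : A ∈ 𝓐) (hB : B ∈ 𝓐) (hp : HasAttractor 𝒰 A p)
    (hq : HasAttractor 𝒰 B q) (hAB : Crosses A B) : p = q := by
  by_contra hpq
  obtain ⟨c, hc⟩ := hp.inter_nonempty_of_crosses hq hpq (h.big A hA) (h.closed A hA)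
    (h.big B hB) (h.closed B hB) hAB
  rcases hp.exists_isNorthSouth_of_mem_inter hq hpq hc with ⟨A', hp'⟩ | ⟨B', hq'⟩
  · exact hpq (h.attractor_eq_of_repeller_mem h𝒰 hA hB hp' hq hc.2)
  · exact hpq (h.attractor_eq_of_repeller_mem h𝒰 hB hA hq' hp hc.1).symm

theorem attractor_eq (h : IsLocalConvPairing G 𝓐) (h𝒰 : (𝒰 : Filter G) ≤ cofinite) (hA : A ∈ 𝓐)
    (hB : B ∈ 𝓐) (hp : HasAttractor 𝒰 A p) (hq : HasAttractor 𝒰 B q) : p = q := by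
  rcases (A ∩ B).eq_empty_or_nonempty with hAB | hAB
  · have hseq : CrossSeqAvoiding 𝓐 A B (A ∩ B) := (h.connect A hA B hB (by simp [hAB])).2
      fun ⟨c, hc⟩ => singleton_ne_empty c (hc.symm.trans hAB)
    have hpropagate : ∀ C, Relation.ReflTransGen (CrossesOff 𝓐 (A ∩ B)) A C →
        HasAttractor 𝒰 C p := by
      intro C hC
      induction hC with
      | refl => exact hp
      | tail _ hstep ih =>
        obtain ⟨hC, hD, hCD, -⟩ := hstep
        obtain ⟨r, hr⟩ := h.exists_hasAttractor h𝒰 hD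
        exact h.attractor_eq_of_crosses h𝒰 hC hD ih hr hCD ▸ hr
    exact (hpropagate B hseq.reflTransGen).unique hq (h.big B hB)
  · exact h.attractor_eq_of_crosses h𝒰 hA hB hp hq (.inl hAB)

end IsLocalConvPairing

end UniqueAttractor

section Convergence

variable {G X : Type*} [Group G] [MulAction G X] {𝒰 : Ultrafilter G} {A B : Set X}
  {𝓐 𝓑 : Set (Set X)} {n p z : X}

theorem ShrinksTo.sUnion [TopologicalSpace X] (h𝓑 : 𝓑.Finite) (h : ∀ B ∈ 𝓑, ShrinksTo 𝒰 B p) :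
    ShrinksTo 𝒰 (⋃₀ 𝓑) p := by
  refine tendsto_smallSets_iff.2 fun V hV => ?_
  filter_upwards [(eventually_all_finite h𝓑).2 fun B hB => (h B hB).eventually hV] with g hg
  rw [smul_set_sUnion]
  exact iUnion₂_subset hg

theorem exists_tendsto_ne_of_not_convergesOff [TopologicalSpace X] [CompactSpace X]
    (h : ¬ ConvergesOff (𝒰 : Filter G) A n p) :
    ∃ U ∈ 𝓝 n, ∃ x : G → X, (∀ᶠ g : G in 𝒰, x g ∈ A \ U) ∧
      ∃ y ≠ p, Tendsto (fun g : G => g • x g) 𝒰 (𝓝 y) := by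
  simp only [ConvergesOff, not_forall] at h
  obtain ⟨U, hU, V, hV, hUV⟩ := h
  have hescape : ∀ᶠ g : G in 𝒰, ∃ x ∈ A \ U, g • x ∉ V := by
    filter_upwards [Ultrafilter.eventually_not.2 hUV] with g hg
    obtain ⟨_, ⟨x, hx, rfl⟩, hxV⟩ := not_subset.1 hg
    exact ⟨x, hx, hxV⟩
  obtain ⟨x, hx⟩ := hescape.choice
  obtain ⟨y, hy⟩ : ∃ y, Tendsto (fun g : G => g • x g) 𝒰 (𝓝 y) :=
    ⟨_, (𝒰.map fun g : G => g • x g).le_nhds_lim⟩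
  refine ⟨U, hU, x, hx.mono fun g hg => hg.1, y, ?_, hy⟩
  rintro rfl
  obtain ⟨g, hgx, hgV⟩ := (hx.and (hy.eventually hV)).exists
  exact hgx.2 hgV

/-- If points `g • x` accumulate at some `y ≠ p` although `x` stays away from `n`, choose a
continuum `K ⊆ {n}ᶜ` containing `z` and all possible `x`. The connected set `g • K` joins points
close to `y` and to `p`, so it meets any `E` separating these; but `g⁻¹ • E` shrinks to `n ∉ K`. -/
theorem convergesOff_univ [TopologicalSpace X] [T2Space X] [CompactSpace X]
    [LocallyConnectedSpace X] [ContinuousConstSMul G X] (hn : IsPreconnected ({n}ᶜ : Set X))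
    (hz : z ∈ basin 𝒰 p) (hzn : z ≠ n)
    (hsep : ∀ y ≠ p, ∃ E, IsClosed E ∧ SepPts E y p ∧ ShrinksTo 𝒰⁻¹ E n) :
    ConvergesOff (𝒰 : Filter G) univ n p := by
  by_contra hconv
  obtain ⟨U, hU, x, hxU, y, hyp, hy⟩ := exists_tendsto_ne_of_not_convergesOff hconv
  obtain ⟨E, hE, hEyp, hEn⟩ := hsep y hyp
  obtain ⟨K, hK, hKc, hUK, hKn⟩ := exists_isCompact_isPreconnected_superset
    (isOpen_interior.sdiff isClosed_singleton).isClosed_compl.isCompact isOpen_compl_singleton hn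
    (compl_subset_compl.2 (singleton_subset_iff.2 ⟨mem_interior_iff_mem_nhds.2 hU, hzn.symm⟩) :
      (interior U \ {z})ᶜ ⊆ {n}ᶜ)
  have hEK : ∀ᶠ g : G in 𝒰, g⁻¹ • E ⊆ Kᶜ := eventually_ultrafilter_inv.1 <|
    hEn.eventually (hK.isClosed.isOpen_compl.mem_nhds fun hnK => hKn hnK rfl)
  obtain ⟨g, hgx, hgE, hgsep⟩ := (hxU.and (hEK.and
    ((hy.prodMk_nhds hz).eventually (hEyp.eventually hE)))).exists
  have hgEK : Disjoint E (g • K) := by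
    rwa [← subset_compl_iff_disjoint_right, ← smul_set_compl, subset_smul_set_iff]
  refine hgsep.notMem_of_isPreconnected (hKc.image _ (continuous_const_smul g).continuousOn) hgEK
    (smul_mem_smul_set (hUK fun hxU => ?_)) (smul_mem_smul_set (hUK fun hzU => hzU.2 rfl))
  exact hgx.2 (interior_subset hxU.1)

theorem FineFam.nonempty_of_nontrivial [PseudoMetricSpace X] [PreconnectedSpace X] [Nontrivial X]
    (h : FineFam 𝓐) : 𝓐.Nonempty := by
  obtain ⟨x, y, hxy⟩ := exists_pair_ne X
  obtain ⟨𝓑, h𝓑, -, hsep⟩ := h x y hxy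
  refine nonempty_iff_ne_empty.2 fun h𝓐 => ?_
  obtain rfl : 𝓑 = ∅ := subset_empty_iff.1 (h𝓐 ▸ h𝓑)
  exact hsep.notMem_of_isPreconnected isPreconnected_univ (by simp) (mem_univ x) (mem_univ y)

namespace IsLocalConvPairing

variable [MetricSpace X] [CompactSpace X] [LocallyConnectedSpace X] [ContinuousConstSMul G X]

theorem shrinksTo_inv_of_notMem (h : IsLocalConvPairing G 𝓐) (h𝒰 : (𝒰 : Filter G) ≤ cofinite)
    (hA : A ∈ 𝓐) (hp : HasAttractor 𝒰 A p) (hn : HasAttractor 𝒰⁻¹ A n) (hB : B ∈ 𝓐) (hpB : p ∉ B) :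
    ShrinksTo 𝒰⁻¹ B n := by
  have h𝒰' := ultrafilter_inv_le_cofinite h𝒰
  obtain ⟨m, hm⟩ := h.exists_hasAttractor h𝒰' hB
  obtain rfl := h.attractor_eq h𝒰' hA hB hn hm
  refine hm.resolve_right fun ⟨C, r, hr⟩ => hpB ?_
  have hC : C ∈ 𝓐 := by
    obtain ⟨g, hg⟩ := hr.eventually_smul_eq.exists
    exact hg ▸ h.invariant g B hB
  have hr' : HasAttractor 𝒰 C r := inv_inv 𝒰 ▸ hr.inv.hasAttractor
  exact h.attractor_eq h𝒰 hA hC hp hr' ▸ hr.repeller_mem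

theorem exists_isClosed_sepPts_shrinksTo (h : IsLocalConvPairing G 𝓐)
    (h𝒰 : (𝒰 : Filter G) ≤ cofinite) (hA : A ∈ 𝓐) (hp : HasAttractor 𝒰 A p)
    (hn : HasAttractor 𝒰⁻¹ A n) {y : X} (hyp : y ≠ p) :
    ∃ E, IsClosed E ∧ SepPts E y p ∧ ShrinksTo 𝒰⁻¹ E n := by
  obtain ⟨𝓑, h𝓑, hfin, hsep⟩ := h.fine y p hyp
  exact ⟨⋃₀ 𝓑, isClosed_sUnion_of_finite hfin fun B hB => h.closed B (h𝓑 hB), hsep,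
    .sUnion hfin fun B hB => h.shrinksTo_inv_of_notMem h𝒰 hA hp hn (h𝓑 hB)
      fun hpB => hsep.2.1 ⟨B, hB, hpB⟩⟩

end IsLocalConvPairing

end Convergence

/-- If `(G, 𝓐)` is a local convergence pairing on a Peano continuum `X` without cut
points, then `G` acts as a convergence group on `X`. -/
theorem localConvPairing_convergence {G X : Type*} [Group G] [MulAction G X]
    [MetricSpace X] [CompactSpace X] [ConnectedSpace X] [LocallyConnectedSpace X]
    [ContinuousConstSMul G X]
    (hcut : ∀ x : X, IsPreconnected ({x}ᶜ : Set X))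
    (𝓐 : Set (Set X)) (h : IsLocalConvPairing G 𝓐) :
    ConvGroupOn (Set.univ : Set G) (Set.univ : Set X) := by
  refine convGroupOn_of_forall_ultrafilter isCompact_univ fun 𝒰 h𝒰 _ => ?_
  rcases subsingleton_or_nontrivial X with hX | hX
  · obtain ⟨x⟩ := ‹ConnectedSpace X›.toNonempty
    exact ⟨x, trivial, x, trivial, fun U _ V hV => .of_forall fun g y _ =>
      Subsingleton.elim x y ▸ mem_of_mem_nhds hV⟩
  · obtain ⟨A, hA⟩ := h.fine.nonempty_of_nontrivial
    obtain ⟨p, hp⟩ := h.exists_hasAttractor h𝒰 hA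
    obtain ⟨n, hn⟩ := h.exists_hasAttractor (ultrafilter_inv_le_cofinite h𝒰) hA
    obtain ⟨m, hm⟩ := hp.exists_sdiff_subset_basin
    obtain ⟨z, hzA, hzm, hzn⟩ := exists_mem_ne_ne (h.big A hA) m n
    exact ⟨n, trivial, p, trivial, convergesOff_univ (hcut n) (hm ⟨hzA, hzm⟩) hzn
      fun y hyp => h.exists_isClosed_sepPts_shrinksTo h𝒰 hA hp hn hyp⟩
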